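/- In the local public good game, let (x*, y*, g*) be a Nash equilibrium in which some player i has x*_i > k. Then the closure ḡ* of the equilibrium network is either empty or has a unique non-singleton component (i.e. all non-isolated players lie in one component). Moreover, if in addition there exists a player j ≠ i with isolation provision x_j^I > k, then under Assumption 1 the equilibrium network g* is non-empty. -/

import Mathlib

open Finset Function

noncomputable section

/-- A directed network on `n` players: `g i j = true` iff `i` sponsors a link to `j`. -/
abbrev Net (n : ℕ) := Fin n → Fin n → Bool

/-- The number of links sponsored by player `i`. -/
def deg {n : ℕ} (g : Net n) (i : Fin n) : ℕ :=
  (Finset.univ.filter fun j => g i j = true).card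

/-- Spillovers received by player `i`: the provision of the players she links to. -/
def spill {n : ℕ} (x : Fin n → ℝ) (g : Net n) (i : Fin n) : ℝ :=
  ∑ j, if g i j = true then x j else 0

/-- Public good consumption of player `i`: own provision plus spillovers. -/
def cons {n : ℕ} (x : Fin n → ℝ) (g : Net n) (i : Fin n) : ℝ :=
  x i + spill x g i

/-- The primitives of the local public good game: prices of the private good, wealths,
linking cost, utilities and induced Engel curves. -/
structure Game (n : ℕ) where
  p : Fin n → ℝ
  w : Fin n → ℝ
  k : ℝ
  U : Fin n → ℝ → ℝ → ℝ
  γ : Fin n → ℝ → ℝ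
  p_pos : ∀ i, 0 < p i
  w_pos : ∀ i, 0 < w i
  k_nonneg : 0 ≤ k
  U_smooth : ∀ i, ContDiff ℝ 2 fun q : ℝ × ℝ => U i q.1 q.2
  U_sconcave : ∀ i, StrictConcaveOn ℝ Set.univ fun q : ℝ × ℝ => U i q.1 q.2
  U_mono_x : ∀ i b, StrictMono fun a => U i a b
  U_mono_y : ∀ i a, StrictMono fun b => U i a b

/-- Net social income of player `i`. -/
def netInc {n : ℕ} (G : Game n) (x : Fin n → ℝ) (g : Net n) (i : Fin n) : ℝ :=
  G.w i - (deg g i : ℝ) * G.k + spill x g i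

/-- Assumption 1 (normality): each Engel curve is continuously differentiable with
derivative in `[0,1]`. -/
def NormalGame {n : ℕ} (G : Game n) : Prop :=
  ∀ i, ContDiff ℝ 1 (G.γ i) ∧ ∀ t : ℝ, deriv (G.γ i) t ∈ Set.Icc (0 : ℝ) 1

/-- `G.γ i` is the demand (Engel curve) induced by `U i`: on the budget line with
income `m`, and under the constraint that public good consumption is at least the
spillovers `s`, the optimal public good consumption is `max (γ i m) s`. -/
def EngelCompatible {n : ℕ} (G : Game n) : Prop :=
  ∀ (i : Fin n) (m s xb yb : ℝ), 0 ≤ s → s ≤ xb → 0 ≤ yb → xb + G.p i * yb = m →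
    (∀ xb' yb' : ℝ, s ≤ xb' → 0 ≤ yb' → xb' + G.p i * yb' = m →
      G.U i xb' yb' ≤ G.U i xb yb) →
    xb = max (G.γ i m) s

/-- Budget feasibility of player `i`'s strategy. -/
def Feasible {n : ℕ} (G : Game n) (x y : Fin n → ℝ) (g : Net n) (i : Fin n) : Prop :=
  0 ≤ x i ∧ 0 ≤ y i ∧ g i i = false ∧
    x i + G.p i * y i + (deg g i : ℝ) * G.k = G.w i

/-- Player `i`'s payoff. -/
def payoff {n : ℕ} (G : Game n) (x y : Fin n → ℝ) (g : Net n) (i : Fin n) : ℝ :=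
  G.U i (cons x g i) (y i)

/-- Replace row `i` of the network `g` by `r` (a unilateral linking deviation). -/
def updRow {n : ℕ} (g : Net n) (i : Fin n) (r : Fin n → Bool) : Net n :=
  fun a b => if a = i then r b else g a b

/-- Nash equilibrium: every player's strategy is feasible and no feasible unilateral
deviation (in provision, private consumption and links) improves her payoff. -/
def Nash {n : ℕ} (G : Game n) (x y : Fin n → ℝ) (g : Net n) : Prop :=
  (∀ i, Feasible G x y g i) ∧
  ∀ (i : Fin n) (xi yi : ℝ) (r : Fin n → Bool),
    Feasible G (Function.update x i xi) (Function.update y i yi) (updRow g i r) i →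
    payoff G (Function.update x i xi) (Function.update y i yi) (updRow g i r) i ≤
      payoff G x y g i

/-- Sociable Nash equilibrium: a Nash equilibrium in which any payoff-equivalent
deviation only uses links already established in equilibrium (players indifferent
about a link establish it). -/
def Sociable {n : ℕ} (G : Game n) (x y : Fin n → ℝ) (g : Net n) : Prop :=
  Nash G x y g ∧
  ∀ (i : Fin n) (xi yi : ℝ) (r : Fin n → Bool),
    Feasible G (Function.update x i xi) (Function.update y i yi) (updRow g i r) i →
    payoff G (Function.update x i xi) (Function.update y i yi) (updRow g i r) i =
      payoff G x y g i →
    ∀ j, r j = true → g i j = true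

/-- Strict Nash equilibrium: any feasible unilateral deviation that differs from the
equilibrium strategy strictly reduces the deviator's payoff. -/
def StrictNash {n : ℕ} (G : Game n) (x y : Fin n → ℝ) (g : Net n) : Prop :=
  (∀ i, Feasible G x y g i) ∧
  ∀ (i : Fin n) (xi yi : ℝ) (r : Fin n → Bool),
    Feasible G (Function.update x i xi) (Function.update y i yi) (updRow g i r) i →
    (xi ≠ x i ∨ yi ≠ y i ∨ r ≠ g i) →
    payoff G (Function.update x i xi) (Function.update y i yi) (updRow g i r) i <
      payoff G x y g i

/-- `(xi, yi)` is an optimal bundle for player `i` in isolation (no links). -/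
def IsoOpt {n : ℕ} (G : Game n) (i : Fin n) (xi yi : ℝ) : Prop :=
  0 ≤ xi ∧ 0 ≤ yi ∧ xi + G.p i * yi = G.w i ∧
    ∀ xi' yi' : ℝ, 0 ≤ xi' → 0 ≤ yi' → xi' + G.p i * yi' = G.w i →
      G.U i xi' yi' ≤ G.U i xi yi

/-- `g` is a core-periphery graph with core `C`: core players are mutually linked
(with reciprocated links), periphery players have no links among themselves, and
every non-isolated periphery player links to some core player. -/
def IsCorePeriphery {n : ℕ} (g : Net n) (C : Finset (Fin n)) : Prop :=
  (∀ i ∈ C, ∀ j ∈ C, i ≠ j → g i j = true ∧ g j i = true) ∧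
  (∀ i ∉ C, ∀ j ∉ C, g i j = false) ∧
  (∀ i ∉ C, (∃ j, g i j = true ∨ g j i = true) → ∃ l ∈ C, g i l = true)

/-- `g` is a nested split graph with core `C`: a core-periphery graph in which the
neighborhoods of periphery players are nested. -/
def IsNestedSplit {n : ℕ} (g : Net n) (C : Finset (Fin n)) : Prop :=
  IsCorePeriphery g C ∧
  ∀ i ∉ C, ∀ j ∉ C, deg g j ≤ deg g i → ∀ l, g j l = true → g i l = true

/-- The core of an equilibrium: the players contributing strictly more than the
linking cost. -/
def coreOf {n : ℕ} (G : Game n) (x : Fin n → ℝ) : Finset (Fin n) :=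
  Finset.univ.filter fun i => G.k < x i

/-- Adjacency in the closure of `g`. -/
def adjBar {n : ℕ} (g : Net n) (i j : Fin n) : Prop :=
  g i j = true ∨ g j i = true

/-- All players' consumption choices are optimal given the (fixed) network. -/
def ConsOpt {n : ℕ} (G : Game n) (x y : Fin n → ℝ) (g : Net n) : Prop :=
  ∀ i, Feasible G x y g i ∧
    ∀ xi yi : ℝ,
      Feasible G (Function.update x i xi) (Function.update y i yi) g i →
      payoff G (Function.update x i xi) (Function.update y i yi) g i ≤ payoff G x y g i

/-- Assumption 2: identical preferences and identical price of the private good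
(hence identical Engel curves). -/
def Homogeneous {n : ℕ} (G : Game n) : Prop :=
  ∀ i j, G.U i = G.U j ∧ G.p i = G.p j ∧ G.γ i = G.γ j

/-- Social welfare: the sum of individual payoffs. -/
def welfare {n : ℕ} (G : Game n) (x y : Fin n → ℝ) (g : Net n) : ℝ :=
  ∑ i, G.U i (cons x g i) (y i)

/-- Aggregate feasibility for the social planner: total provision, total private
consumption and total linking costs are financed by total wealth. -/
def FeasAgg {n : ℕ} (G : Game n) (x y : Fin n → ℝ) (g : Net n) : Prop :=
  (∀ i, 0 ≤ x i) ∧ (∀ i, 0 ≤ y i) ∧ (∀ i, g i i = false) ∧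
    ∑ i, x i + ∑ i, G.p i * y i + (∑ i, (deg g i : ℝ)) * G.k ≤ ∑ i, G.w i

/-- Efficient (welfare-maximizing) configuration. -/
def Efficient {n : ℕ} (G : Game n) (x y : Fin n → ℝ) (g : Net n) : Prop :=
  FeasAgg G x y g ∧
  ∀ (x' y' : Fin n → ℝ) (g' : Net n), FeasAgg G x' y' g' →
    welfare G x' y' g' ≤ welfare G x y g

/-- The same game with a different linking cost. -/
def Game.withCost {n : ℕ} (G : Game n) (k' : ℝ) (h : 0 ≤ k') : Game n :=
  { G with k := k', k_nonneg := h }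

/-- The same game with a different wealth distribution. -/
def Game.withWealth {n : ℕ} (G : Game n) (w' : Fin n → ℝ) (h : ∀ i, 0 < w' i) : Game n :=
  { G with w := w', w_pos := h }

/-- Budget feasibility with personalized public good prices `ρ` and lump-sum taxes `τ`. -/
def FeasibleT {n : ℕ} (G : Game n) (ρ τ : Fin n → ℝ) (x y : Fin n → ℝ) (g : Net n)
    (i : Fin n) : Prop :=
  0 ≤ x i ∧ 0 ≤ y i ∧ g i i = false ∧
    ρ i * x i + G.p i * y i + (deg g i : ℝ) * G.k = G.w i - τ i

/-- Nash equilibrium under personalized public good prices `ρ` and lump-sum taxes `τ`. -/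
def NashT {n : ℕ} (G : Game n) (ρ τ : Fin n → ℝ) (x y : Fin n → ℝ) (g : Net n) : Prop :=
  (∀ i, FeasibleT G ρ τ x y g i) ∧
  ∀ (i : Fin n) (xi yi : ℝ) (r : Fin n → Bool),
    FeasibleT G ρ τ (Function.update x i xi) (Function.update y i yi) (updRow g i r) i →
    payoff G (Function.update x i xi) (Function.update y i yi) (updRow g i r) i ≤
      payoff G x y g i

/-!
A link to `b` costs `k` and brings in `x b`, so a player who provides at least `k` and has no link
to some `b` with `k < x b` gains by financing that link out of her own provision. Similarly a
player linked to `b` gains by redirecting that link to anyone providing more than `b`. Hence, for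
a link `a → b` and a player `i` with `k < x i`, either `x b < x i` and `a` links to `i`, or
`k < x i ≤ x b` and `i` links to `b`: every link lies in the component of `i`.

A player who sponsors no link consumes an optimal isolation bundle. By strict concavity that bundle
is unique, so if her isolation provision exceeds `k`, then so does her equilibrium provision, and
`i` has to link to her.
-/

/-- The neighborhood `N_i(g)`: the players to whom `i` sponsors a link. -/
def neighbors {n : ℕ} (g : Net n) (i : Fin n) : Finset (Fin n) :=
  {j | g i j = true}

/-- The bundles of public and private good that player `i` can afford in isolation. -/
def isoBudget {n : ℕ} (G : Game n) (i : Fin n) : Set (ℝ × ℝ) :=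
  {q | 0 ≤ q.1 ∧ 0 ≤ q.2 ∧ q.1 + G.p i * q.2 = G.w i}

section Network

variable {n : ℕ} {g : Net n} {i j : Fin n}

theorem mem_neighbors : j ∈ neighbors g i ↔ g i j = true := by
  simp only [neighbors, mem_filter_univ]

theorem spill_eq_sum_neighbors (x : Fin n → ℝ) (g : Net n) (i : Fin n) :
    spill x g i = ∑ j ∈ neighbors g i, x j :=
  (sum_filter _ _).symm

theorem deg_eq_card_neighbors (g : Net n) (i : Fin n) : deg g i = #(neighbors g i) :=
  rfl

theorem neighbors_eq_empty_iff : neighbors g i = ∅ ↔ ∀ j, g i j = false := by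
  simp only [eq_empty_iff_forall_notMem, mem_neighbors, Bool.not_eq_true]

theorem neighbors_updRow (g : Net n) (i : Fin n) (S : Finset (Fin n)) :
    neighbors (updRow g i fun j => decide (j ∈ S)) i = S := by
  ext j
  simp only [mem_neighbors, updRow, if_true, decide_eq_true_eq]

instance adjBar.instSymm (g : Net n) : Std.Symm (adjBar g) where
  symm _ _ := Or.symm

end Network

section Isolation

variable {n : ℕ} {G : Game n} {i : Fin n}

theorem convex_isoBudget (G : Game n) (i : Fin n) : Convex ℝ (isoBudget G i) := by
  rintro ⟨a, b⟩ ⟨ha, hb, hab⟩ ⟨c, d⟩ ⟨hc, hd, hcd⟩ s t hs ht hst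
  refine ⟨add_nonneg (mul_nonneg hs ha) (mul_nonneg ht hc),
    add_nonneg (mul_nonneg hs hb) (mul_nonneg ht hd), ?_⟩
  simp only [Prod.fst_add, Prod.snd_add, Prod.smul_fst, Prod.smul_snd, smul_eq_mul]
  linear_combination s * hab + t * hcd + G.w i * hst

theorem isoOpt_iff_isMaxOn {a b : ℝ} :
    IsoOpt G i a b ↔
      (a, b) ∈ isoBudget G i ∧ IsMaxOn (fun q : ℝ × ℝ => G.U i q.1 q.2) (isoBudget G i) (a, b) := by
  simp only [IsoOpt, isoBudget, isMaxOn_iff, Set.mem_ofPred_eq, Prod.forall, and_imp, and_assoc]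

theorem IsoOpt.unique {a b a' b' : ℝ} (h : IsoOpt G i a b) (h' : IsoOpt G i a' b') :
    a = a' ∧ b = b' := by
  obtain ⟨hmem, hmax⟩ := isoOpt_iff_isMaxOn.mp h
  obtain ⟨hmem', hmax'⟩ := isoOpt_iff_isMaxOn.mp h'
  have hconc := (G.U_sconcave i).subset (Set.subset_univ _) (convex_isoBudget G i)
  exact Prod.mk.inj (hconc.eq_of_isMaxOn hmax hmax' hmem hmem')

end Isolation

namespace Nash

variable {n : ℕ} {G : Game n} {x y : Fin n → ℝ} {g : Net n} {i a b : Fin n}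

theorem not_mem_neighbors_self (h : Nash G x y g) (i : Fin n) : i ∉ neighbors g i := by
  rw [mem_neighbors, (h.1 i).2.2.1]
  exact Bool.false_ne_true

theorem utility_le (h : Nash G x y g) {xi yi : ℝ} {S : Finset (Fin n)}
    (hxi : 0 ≤ xi) (hyi : 0 ≤ yi) (hS : i ∉ S)
    (hbudget : xi + G.p i * yi + (#S : ℝ) * G.k = G.w i) :
    G.U i (xi + ∑ j ∈ S, x j) yi ≤ G.U i (_root_.cons x g i) (y i) := by
  have hdeg : deg (updRow g i fun j => decide (j ∈ S)) i = #S := by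
    rw [deg_eq_card_neighbors, neighbors_updRow]
  have hspill : spill (update x i xi) (updRow g i fun j => decide (j ∈ S)) i = ∑ j ∈ S, x j := by
    rw [spill_eq_sum_neighbors, neighbors_updRow, sum_update_of_notMem hS]
  have hdev := h.2 i xi yi fun j => decide (j ∈ S)
  simp only [Feasible, payoff, _root_.cons, hdeg, hspill, update_self] at hdev
  exact hdev ⟨hxi, hyi, by simpa [updRow] using hS, hbudget⟩

/- Private consumption is held fixed, so that an unprofitable deviation cannot raise public good
consumption. -/
theorem add_sum_le_add_sum_neighbors (h : Nash G x y g) {xi : ℝ} {S : Finset (Fin n)} (hxi : 0 ≤ xi)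
    (hS : i ∉ S) (hcost : xi + (#S : ℝ) * G.k = x i + (#(neighbors g i) : ℝ) * G.k) :
    xi + ∑ j ∈ S, x j ≤ x i + ∑ j ∈ neighbors g i, x j := by
  obtain ⟨-, hyi, -, hbudget⟩ := h.1 i
  rw [deg_eq_card_neighbors] at hbudget
  rw [← spill_eq_sum_neighbors]
  exact (G.U_mono_x i (y i)).le_iff_le.mp (h.utility_le hxi hyi hS (by linarith))

theorem link_of_cost_le_of_cost_lt (h : Nash G x y g) (hi : G.k ≤ x i) (hb : G.k < x b)
    (hib : i ≠ b) : g i b = true := by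
  by_contra hlink
  rw [← mem_neighbors] at hlink
  have hself : i ∉ insert b (neighbors g i) := by
    simp only [mem_insert, hib, h.not_mem_neighbors_self i, or_self, not_false_eq_true]
  have hle := h.add_sum_le_add_sum_neighbors (sub_nonneg.mpr hi) hself (by
    rw [card_insert_of_notMem hlink]
    push_cast
    ring)
  rw [sum_insert hlink] at hle
  linarith

theorem link_of_link_of_lt (h : Nash G x y g) (hab : g a b = true) (hlt : x b < x i)
    (hai : a ≠ i) : g a i = true := by
  by_contra hlink
  rw [← mem_neighbors] at hab hlink
  have hi : i ∉ (neighbors g a).erase b := fun hmem => hlink (mem_of_mem_erase hmem)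
  have hself : a ∉ insert i ((neighbors g a).erase b) := by
    simp only [mem_insert, hai, mem_erase, h.not_mem_neighbors_self a, and_false, or_self,
      not_false_eq_true]
  have hle := h.add_sum_le_add_sum_neighbors (h.1 a).1 hself (by
    rw [card_insert_of_notMem hi, card_erase_add_one hab])
  rw [sum_insert hi, sum_erase_eq_sub hab] at hle
  linarith

theorem reflTransGen_adjBar_of_link (h : Nash G x y g) (hi : G.k < x i) (hab : g a b = true) :
    Relation.ReflTransGen (adjBar g) a i := by
  rcases lt_or_ge (x b) (x i) with hlt | hge
  · rcases eq_or_ne a i with rfl | hai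
    · exact .refl
    · exact .single (.inl (h.link_of_link_of_lt hab hlt hai))
  · rcases eq_or_ne i b with rfl | hib
    · exact .single (.inl hab)
    · have hlink : g i b = true := h.link_of_cost_le_of_cost_lt hi.le (hi.trans_le hge) hib
      exact .head (.inl hab) (.single (.inr hlink))

theorem reflTransGen_adjBar_of_adjBar (h : Nash G x y g) (hi : G.k < x i) (hab : adjBar g a b) :
    Relation.ReflTransGen (adjBar g) a i := by
  rcases hab with hlink | hlink
  · exact h.reflTransGen_adjBar_of_link hi hlink
  · exact .head (.inr hlink) (h.reflTransGen_adjBar_of_link hi hlink)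

theorem isoOpt_of_neighbors_eq_empty (h : Nash G x y g) (hempty : neighbors g i = ∅) :
    IsoOpt G i (x i) (y i) := by
  obtain ⟨hxi, hyi, -, hbudget⟩ := h.1 i
  refine ⟨hxi, hyi, ?_, fun a b ha hb hab => ?_⟩
  · simpa only [deg_eq_card_neighbors, hempty, card_empty, Nat.cast_zero, zero_mul, add_zero]
      using hbudget
  · simpa only [_root_.cons, spill_eq_sum_neighbors, hempty, sum_empty, add_zero] using
      h.utility_le ha hb (notMem_empty i) (by simpa using hab)

theorem link_or_exists_link_of_isoOpt (h : Nash G x y g) (hi : G.k ≤ x i) {j : Fin n} {xj yj : ℝ}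
    (hij : i ≠ j) (hj : IsoOpt G j xj yj) (hxj : G.k < xj) :
    g i j = true ∨ ∃ b, g j b = true := by
  by_contra! ⟨hlink, hnone⟩
  have hempty : neighbors g j = ∅ :=
    neighbors_eq_empty_iff.mpr fun b => Bool.eq_false_iff.mpr (hnone b)
  obtain ⟨rfl, -⟩ := hj.unique (h.isoOpt_of_neighbors_eq_empty hempty)
  exact hlink (h.link_of_cost_le_of_cost_lt hi hxj hij)

end Nash

theorem unique_component_general {n : ℕ} (G : Game n) (x y : Fin n → ℝ) (g : Net n)
    (hNE : Nash G x y g) (i : Fin n) (hi : G.k < x i) :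
    (∀ a b : Fin n, (∃ c, adjBar g a c) → (∃ c, adjBar g b c) →
      Relation.ReflTransGen (adjBar g) a b) ∧
    ∀ (j : Fin n) (xj yj : ℝ), j ≠ i → IsoOpt G j xj yj → G.k < xj →
      g i j = true ∨ ∃ b, g j b = true := by
  refine ⟨?_, fun j xj yj hji hj hxj => hNE.link_or_exists_link_of_isoOpt hi.le hji.symm hj hxj⟩
  rintro a b ⟨c, hac⟩ ⟨d, hbd⟩
  exact (hNE.reflTransGen_adjBar_of_adjBar hi hac).trans
    (symm (hNE.reflTransGen_adjBar_of_adjBar hi hbd))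

/-- In a Nash equilibrium with some player contributing more than `k`,
the closure of the network is empty or all non-isolated players lie in one component;
if moreover some other player's isolation provision exceeds `k`, then under
Assumption 1 the equilibrium network is non-empty. -/
theorem unique_component {n : ℕ} (G : Game n) (hk : 0 < G.k)
    (x y : Fin n → ℝ) (g : Net n) (hNE : Nash G x y g)
    (i : Fin n) (hi : G.k < x i) :
    ((∀ a b, g a b = false) ∨
      ∀ a b : Fin n, (∃ c, adjBar g a c) → (∃ c, adjBar g b c) →
        Relation.ReflTransGen (adjBar g) a b) ∧
    (NormalGame G → EngelCompatible G →
      ∀ xI yI : Fin n → ℝ, (∀ l, IsoOpt G l (xI l) (yI l)) →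
        (∃ j, j ≠ i ∧ G.k < xI j) → ∃ a b, g a b = true) := by
  obtain ⟨hconn, hlink⟩ := unique_component_general G x y g hNE i hi
  exact ⟨.inr hconn, fun _ _ xI yI hI ⟨j, hji, hj⟩ =>
    (hlink j (xI j) (yI j) hji (hI j) hj).elim (⟨i, j, ·⟩) (⟨j, ·⟩)⟩
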